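/- For every solution of the backward Ricci flow system of class U1[Z,Z̄,1] with λ₁ > λ₂, one has A(t)² > λ₁λ₂ for all t ∈ [0,T), and D(t) = Λ · (√(λ₁λ₂) A(t)/(A(t)² + λ₁λ₂)) · ((A(t)² + λ₁λ₂)/(A(t)² − λ₁λ₂))^{3k²} for all t ∈ [0,T), where Λ = λ₄ · ((λ₁+λ₂)/√(λ₁λ₂)) · ((λ₁−λ₂)/(λ₁+λ₂))^{3k²}. -/

import Mathlib

/-!
The product `AB` is a first integral, and the ratio `r = (A − B) / (A + B)` solves the linear
equation `r' = (4 / D) r`, so it stays positive once it is positive. Along the flow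
`(D (A + B))' = −4c (A + B)` with `c = 3k²`, so `D (A + B) r ^ c` is a second first integral.
Eliminating `B` through `AB = λ₁λ₂` turns the latter into the formula for `D`.
-/

open Real Set ENNReal

/-- The time domain `[0, T)` where `T ∈ (0, ∞]` is an extended nonnegative real. -/
def flowDomain (T : ℝ≥0∞) : Set ℝ := {t : ℝ | 0 ≤ t ∧ ENNReal.ofReal t < T}

section LinearODE

variable {E : Type*} [NormedAddCommGroup E] [NormedSpace ℝ E] {s : Set ℝ} {f : ℝ → E} {t₀ t : ℝ}

theorem eq_of_hasDerivWithinAt_zero (hs : Convex ℝ s)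
    (hf : ∀ u ∈ s, HasDerivWithinAt f 0 s u) (ht₀ : t₀ ∈ s) (ht : t ∈ s) : f t = f t₀ := by
  have hle : ‖f t - f t₀‖ ≤ 0 * ‖t - t₀‖ :=
    hs.norm_image_sub_le_of_norm_hasDerivWithin_le hf (fun _ _ ↦ norm_zero.le) ht₀ ht
  rwa [zero_mul, norm_le_zero_iff, sub_eq_zero] at hle

theorem hasDerivWithinAt_integral_uIcc [CompleteSpace E] (hf : ContinuousOn f (uIcc t₀ t)) {u : ℝ}
    (hu : u ∈ uIcc t₀ t) :
    HasDerivWithinAt (fun v ↦ ∫ x in t₀..v, f x) (f u) (uIcc t₀ t) u := by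
  have hint : IntervalIntegrable f MeasureTheory.volume t₀ u :=
    (hf.mono (uIcc_subset_uIcc_left hu)).intervalIntegrable
  -- The `FTCFilter` instance is only available for a literal `Icc` and a `Fact` on membership.
  rw [uIcc] at hf hu ⊢
  have : Fact (u ∈ Icc (t₀ ⊓ t) (t₀ ⊔ t)) := ⟨hu⟩
  exact intervalIntegral.integral_hasDerivWithinAt_right hint
    (hf.stronglyMeasurableAtFilter_nhdsWithin measurableSet_Icc u) (hf u hu)

theorem eq_exp_integral_smul_of_hasDerivWithinAt (hs : s.OrdConnected) {a : ℝ → ℝ}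
    (ha : ContinuousOn a s) (hf : ∀ u ∈ s, HasDerivWithinAt f (a u • f u) s u)
    (ht₀ : t₀ ∈ s) (ht : t ∈ s) : f t = exp (∫ u in t₀..t, a u) • f t₀ := by
  have hsub : uIcc t₀ t ⊆ s := hs.uIcc_subset ht₀ ht
  let F : ℝ → ℝ := fun v ↦ ∫ u in t₀..v, a u
  have hderiv : ∀ u ∈ uIcc t₀ t,
      HasDerivWithinAt (fun v ↦ exp (-F v) • f v) 0 (uIcc t₀ t) u := by
    intro u hu
    have hF : HasDerivWithinAt F (a u) (uIcc t₀ t) u :=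
      hasDerivWithinAt_integral_uIcc (ha.mono hsub) hu
    refine (hF.neg.exp.smul ((hf u (hsub hu)).mono hsub)).congr_deriv ?_
    module
  have hconst : exp (-F t) • f t = f t₀ := by
    simpa [F] using eq_of_hasDerivWithinAt_zero (convex_uIcc t₀ t) hderiv
      left_mem_uIcc right_mem_uIcc
  rw [← hconst, smul_smul, ← exp_add, add_neg_cancel, exp_zero, one_smul]

end LinearODE

/-- Positive solutions `(A, B, D)` on the time set `s` of the backward Ricci flow system of class
`U1[Z,Z̄,1]`. The component `C`, which is constant and decoupled from the others, is left out, and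
an arbitrary real `c` takes the place of `3k²`. -/
structure IsBackwardFlowOn (c : ℝ) (s : Set ℝ) (A B D : ℝ → ℝ) : Prop where
  pos : ∀ t ∈ s, 0 < A t ∧ 0 < B t ∧ 0 < D t
  hasDerivWithinAt_A : ∀ t ∈ s, HasDerivWithinAt A ((A t ^ 2 - B t ^ 2) / (B t * D t)) s t
  hasDerivWithinAt_B : ∀ t ∈ s, HasDerivWithinAt B ((B t ^ 2 - A t ^ 2) / (A t * D t)) s t
  hasDerivWithinAt_D : ∀ t ∈ s,
    HasDerivWithinAt D (-(((A t - B t) ^ 2 + 4 * c * (A t * B t)) / (A t * B t))) s t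

namespace IsBackwardFlowOn

variable {c : ℝ} {s : Set ℝ} {A B D : ℝ → ℝ} {t₀ t : ℝ}

theorem mul_eq (h : IsBackwardFlowOn c s A B D) (hs : Convex ℝ s) (ht₀ : t₀ ∈ s) (ht : t ∈ s) :
    A t * B t = A t₀ * B t₀ := by
  refine eq_of_hasDerivWithinAt_zero (f := fun t ↦ A t * B t) hs (fun u hu ↦ ?_) ht₀ ht
  obtain ⟨hA, hB, hD⟩ := h.pos u hu
  refine ((h.hasDerivWithinAt_A u hu).mul (h.hasDerivWithinAt_B u hu)).congr_deriv ?_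
  field_simp
  ring

theorem hasDerivWithinAt_sub_div_add (h : IsBackwardFlowOn c s A B D) (ht : t ∈ s) :
    HasDerivWithinAt (fun u ↦ (A u - B u) / (A u + B u))
      (4 / D t * ((A t - B t) / (A t + B t))) s t := by
  obtain ⟨hA, hB, hD⟩ := h.pos t ht
  have hA' := h.hasDerivWithinAt_A t ht
  have hB' := h.hasDerivWithinAt_B t ht
  refine ((hA'.fun_sub hB').fun_div (hA'.fun_add hB') (by positivity)).congr_deriv ?_
  field_simp
  ring

theorem hasDerivWithinAt_mul_add (h : IsBackwardFlowOn c s A B D) (ht : t ∈ s) :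
    HasDerivWithinAt (fun u ↦ D u * (A u + B u)) (-(4 * c) * (A t + B t)) s t := by
  obtain ⟨hA, hB, hD⟩ := h.pos t ht
  have hAB := (h.hasDerivWithinAt_A t ht).fun_add (h.hasDerivWithinAt_B t ht)
  refine ((h.hasDerivWithinAt_D t ht).fun_mul hAB).congr_deriv ?_
  field_simp
  ring

theorem lt_of_lt (h : IsBackwardFlowOn c s A B D) (hs : s.OrdConnected) (ht₀ : t₀ ∈ s)
    (hlt : B t₀ < A t₀) (ht : t ∈ s) : B t < A t := by
  have hcont : ContinuousOn (fun u ↦ 4 / D u) s :=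
    continuousOn_const.div (fun u hu ↦ (h.hasDerivWithinAt_D u hu).continuousWithinAt)
      fun u hu ↦ (h.pos u hu).2.2.ne'
  have hratio := eq_exp_integral_smul_of_hasDerivWithinAt hs hcont
    (fun u hu ↦ h.hasDerivWithinAt_sub_div_add hu) ht₀ ht
  obtain ⟨hA₀, hB₀, -⟩ := h.pos t₀ ht₀
  obtain ⟨hA, hB, -⟩ := h.pos t ht
  have hratio_pos : 0 < (A t - B t) / (A t + B t) :=
    hratio ▸ smul_pos (exp_pos _) (div_pos (sub_pos.2 hlt) (add_pos hA₀ hB₀))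
  exact sub_pos.1 ((div_pos_iff_of_pos_right (add_pos hA hB)).1 hratio_pos)

theorem mul_add_mul_rpow_eq (h : IsBackwardFlowOn c s A B D) (hs : Convex ℝ s)
    (hlt : ∀ u ∈ s, B u < A u) (ht₀ : t₀ ∈ s) (ht : t ∈ s) :
    D t * (A t + B t) * ((A t - B t) / (A t + B t)) ^ c =
      D t₀ * (A t₀ + B t₀) * ((A t₀ - B t₀) / (A t₀ + B t₀)) ^ c := by
  refine eq_of_hasDerivWithinAt_zero
    (f := fun u ↦ D u * (A u + B u) * ((A u - B u) / (A u + B u)) ^ c) hs (fun u hu ↦ ?_) ht₀ ht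
  obtain ⟨hA, hB, hD⟩ := h.pos u hu
  have hsub_ne : A u - B u ≠ 0 := (sub_pos.2 (hlt u hu)).ne'
  have hratio_ne : (A u - B u) / (A u + B u) ≠ 0 := div_ne_zero hsub_ne (add_pos hA hB).ne'
  refine ((h.hasDerivWithinAt_mul_add hu).fun_mul
    ((h.hasDerivWithinAt_sub_div_add hu).rpow_const (p := c) (.inl hratio_ne))).congr_deriv ?_
  rw [rpow_sub_one hratio_ne]
  field_simp
  ring

end IsBackwardFlowOn

theorem ordConnected_flowDomain (T : ℝ≥0∞) : (flowDomain T).OrdConnected :=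
  ⟨fun _ hx _ hy _ hz ↦ ⟨hx.1.trans hz.1, (ofReal_le_ofReal hz.2).trans_lt hy.2⟩⟩

theorem zero_mem_flowDomain {T : ℝ≥0∞} (hT : 0 < T) : (0 : ℝ) ∈ flowDomain T :=
  ⟨le_rfl, by rwa [ofReal_zero]⟩

theorem stmt2_general {c : ℝ} {s : Set ℝ} {A B D : ℝ → ℝ} (hs : s.OrdConnected)
    (h : IsBackwardFlowOn c s A B D) {t₀ : ℝ} (ht₀ : t₀ ∈ s) (hlt : B t₀ < A t₀) :
    ∀ t ∈ s,
      A t₀ * B t₀ < A t ^ 2 ∧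
      D t = (D t₀ * ((A t₀ + B t₀) / √(A t₀ * B t₀)) *
              ((A t₀ - B t₀) / (A t₀ + B t₀)) ^ c) *
            (√(A t₀ * B t₀) * A t / (A t ^ 2 + A t₀ * B t₀)) *
            ((A t ^ 2 + A t₀ * B t₀) / (A t ^ 2 - A t₀ * B t₀)) ^ c := by
  intro t ht
  have hBA : ∀ u ∈ s, B u < A u := fun u hu ↦ h.lt_of_lt hs ht₀ hlt hu
  obtain ⟨hA, hB, -⟩ := h.pos t ht
  rw [← h.mul_eq hs.convex ht₀ ht]
  have hadd : A t ^ 2 + A t * B t = A t * (A t + B t) := by ring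
  have hsub : A t ^ 2 - A t * B t = A t * (A t - B t) := by ring
  have hsub_pos : 0 < A t - B t := sub_pos.2 (hBA t ht)
  refine ⟨sub_pos.1 (hsub ▸ mul_pos hA hsub_pos), ?_⟩
  have hratio : (A t ^ 2 + A t * B t) / (A t ^ 2 - A t * B t) =
      ((A t - B t) / (A t + B t))⁻¹ := by
    rw [hadd, hsub, mul_div_mul_left _ _ hA.ne', inv_div]
  rw [hratio, Real.inv_rpow (by positivity), hadd]
  have hcons := h.mul_add_mul_rpow_eq hs.convex hBA ht₀ ht
  field_simp
  linear_combination hcons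

/-- For every solution of the backward Ricci flow system of class `U1[Z,Z̄,1]` with `λ₁ > λ₂`,
one has `A(t)² > λ₁λ₂` on `[0,T)` and
`D(t) = Λ · (√(λ₁λ₂) A/(A² + λ₁λ₂)) · ((A² + λ₁λ₂)/(A² − λ₁λ₂))^{3k²}` where
`Λ = λ₄ · ((λ₁+λ₂)/√(λ₁λ₂)) · ((λ₁−λ₂)/(λ₁+λ₂))^{3k²}`. -/
theorem stmt2 (k : ℝ) (T : ℝ≥0∞) (hT : 0 < T)
    (lam1 lam2 lam3 lam4 : ℝ)
    (hlam1 : 0 < lam1) (hlam2 : 0 < lam2) (hlam3 : 0 < lam3) (hlam4 : 0 < lam4)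
    (hlt : lam2 < lam1)
    (A B C D : ℝ → ℝ)
    (hpos : ∀ t ∈ flowDomain T, 0 < A t ∧ 0 < B t ∧ 0 < C t ∧ 0 < D t)
    (hA : ∀ t ∈ flowDomain T,
      HasDerivWithinAt A ((A t ^ 2 - B t ^ 2) / (B t * D t)) (flowDomain T) t)
    (hB : ∀ t ∈ flowDomain T,
      HasDerivWithinAt B ((B t ^ 2 - A t ^ 2) / (A t * D t)) (flowDomain T) t)
    (hC : ∀ t ∈ flowDomain T,
      HasDerivWithinAt C 0 (flowDomain T) t)
    (hD : ∀ t ∈ flowDomain T,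
      HasDerivWithinAt D (-(((A t - B t) ^ 2 + 12 * k ^ 2 * (A t * B t)) / (A t * B t)))
        (flowDomain T) t)
    (hA0 : A 0 = lam1) (hB0 : B 0 = lam2) (hC0 : C 0 = lam3) (hD0 : D 0 = lam4) :
    ∀ t ∈ flowDomain T,
      lam1 * lam2 < A t ^ 2 ∧
      D t = (lam4 * ((lam1 + lam2) / Real.sqrt (lam1 * lam2)) *
              ((lam1 - lam2) / (lam1 + lam2)) ^ (3 * k ^ 2)) *
            (Real.sqrt (lam1 * lam2) * A t / (A t ^ 2 + lam1 * lam2)) *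
            ((A t ^ 2 + lam1 * lam2) / (A t ^ 2 - lam1 * lam2)) ^ (3 * k ^ 2) := by
  subst hA0 hB0 hD0
  have hflow : IsBackwardFlowOn (3 * k ^ 2) (flowDomain T) A B D :=
    ⟨fun t ht ↦ ⟨(hpos t ht).1, (hpos t ht).2.1, (hpos t ht).2.2.2⟩, hA, hB,
      fun t ht ↦ (hD t ht).congr_deriv (by ring)⟩
  exact stmt2_general (ordConnected_flowDomain T) hflow (zero_mem_flowDomain hT) hlt
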